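/- arXiv:1205.6727 — 6 statements merged into one kernel-verified Lean document; each statement's English description precedes it below -/
import Mathlib

section
/- The ideal HOTS map f is continuously differentiable on ℝⁿ and its Jacobian matrix at any point p ∈ ℝⁿ is the matrix P(p) with entries P(p)_{ij} = (1/2)·(A_{ji} e^{p_j} / Σ_{l} A_{li} e^{p_l} + A_{ij} e^{−p_j} / Σ_{l} A_{il} e^{−p_l}); moreover P(p) is a row-stochastic nonnegative matrix (each row sums to 1). -/
open BigOperators Matrix

/-- The ideal HOTS map. -/
noncomputable def hotsMap {n : ℕ} (A : Matrix (Fin n) (Fin n) ℝ) (x : Fin n → ℝ) : Fin n → ℝ :=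
  fun i => (1 / 2) * (Real.log (∑ j, A j i * Real.exp (x j))
    - Real.log (∑ j, A i j * Real.exp (-(x j))))

/-- The Jacobian matrix `P(p)` of the ideal HOTS map at `p`. -/
noncomputable def hotsJac {n : ℕ} (A : Matrix (Fin n) (Fin n) ℝ) (p : Fin n → ℝ) :
    Matrix (Fin n) (Fin n) ℝ :=
  fun i j => (1 / 2) * (A j i * Real.exp (p j) / (∑ l, A l i * Real.exp (p l))
    + A i j * Real.exp (-(p j)) / (∑ l, A i l * Real.exp (-(p l))))

/-!
Each component of the HOTS map is half the difference of two weighted log-sum-exp functions, with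
the `i`-th column of `A` as weights at `x` and the `i`-th row as weights at `-x`. The gradient of
log-sum-exp is the softmax vector, and the reflection `x ↦ -x` turns the difference into a sum of
gradients: row `i` of the Jacobian is the midpoint of two softmax vectors, hence a point of the
standard simplex.
-/

section LogSumExp

variable {ι : Type*} [Fintype ι] {w x : ι → ℝ}

/-- The exponential sum with weights `w`, i.e. the partition function normalizing `softmax w`. -/
noncomputable def expSum (w x : ι → ℝ) : ℝ :=
  ∑ j, w j * Real.exp (x j)

/-- The log-sum-exp function with weights `w`; its values are junk where `expSum w x ≤ 0`. -/
noncomputable def logSumExp (w x : ι → ℝ) : ℝ :=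
  Real.log (expSum w x)

/-- The softmax vector with weights `w`, the gradient of `logSumExp w`. -/
noncomputable def softmax (w x : ι → ℝ) : ι → ℝ :=
  fun j => w j * Real.exp (x j) / expSum w x

theorem expSum_pos (hw : 0 < w) (x : ι → ℝ) : 0 < expSum w x := by
  obtain ⟨hw_nonneg, k, hk⟩ := Pi.lt_def.mp hw
  exact Finset.sum_pos' (fun j _ => mul_nonneg (hw_nonneg j) (Real.exp_pos _).le)
    ⟨k, Finset.mem_univ k, mul_pos hk (Real.exp_pos _)⟩

theorem softmax_mem_stdSimplex (hw : 0 < w) (x : ι → ℝ) : softmax w x ∈ stdSimplex ℝ ι := by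
  refine ⟨fun j => ?_, ?_⟩
  · exact div_nonneg (mul_nonneg (hw.le j) (Real.exp_pos _).le) (expSum_pos hw x).le
  · exact (Finset.sum_div ..).symm.trans (div_self (expSum_pos hw x).ne')

theorem contDiff_expSum (w : ι → ℝ) {m : WithTop ℕ∞} : ContDiff ℝ m (expSum w) := by
  unfold expSum
  fun_prop

theorem contDiff_logSumExp (hw : 0 < w) {m : WithTop ℕ∞} : ContDiff ℝ m (logSumExp w) :=
  (contDiff_expSum w).log fun x => (expSum_pos hw x).ne'

theorem hasStrictFDerivAt_expSum (w x : ι → ℝ) :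
    HasStrictFDerivAt (expSum w)
      (dotProductBilin ℝ ℝ fun j => w j * Real.exp (x j)).toContinuousLinearMap x := by
  have sum_deriv : HasStrictFDerivAt (expSum w) _ x :=
    HasStrictFDerivAt.fun_sum fun j _ => (hasStrictFDerivAt_apply j x).exp.const_mul (w j)
  refine sum_deriv.congr_fderiv ?_
  ext v
  simp [dotProduct, mul_assoc]

theorem hasStrictFDerivAt_logSumExp (h : expSum w x ≠ 0) :
    HasStrictFDerivAt (logSumExp w)
      (dotProductBilin ℝ ℝ (softmax w x)).toContinuousLinearMap x := by
  refine ((hasStrictFDerivAt_expSum w x).log h).congr_fderiv ?_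
  ext v
  simp [softmax, dotProduct, Finset.mul_sum, div_eq_inv_mul, mul_assoc]

end LogSumExp

section HotsMap

variable {n : ℕ} {A : Matrix (Fin n) (Fin n) ℝ}

theorem hotsMap_apply (A : Matrix (Fin n) (Fin n) ℝ) (x : Fin n → ℝ) (i : Fin n) :
    hotsMap A x i = (1 / 2) * (logSumExp (Aᵀ i) x - logSumExp (A i) (-x)) :=
  rfl

theorem hotsJac_row (A : Matrix (Fin n) (Fin n) ℝ) (p : Fin n → ℝ) (i : Fin n) :
    hotsJac A p i = midpoint ℝ (softmax (Aᵀ i) p) (softmax (A i) (-p)) := by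
  ext j
  simp [hotsJac, softmax, expSum, midpoint_eq_smul_add]

theorem contDiff_hotsMap (hrow : ∀ i, 0 < A i) (hcol : ∀ j, 0 < Aᵀ j) {m : WithTop ℕ∞} :
    ContDiff ℝ m (hotsMap A) := by
  refine contDiff_pi.mpr fun i => ?_
  simp only [hotsMap_apply]
  exact contDiff_const.mul
    ((contDiff_logSumExp (hcol i)).sub ((contDiff_logSumExp (hrow i)).comp contDiff_neg))

theorem hasStrictFDerivAt_hotsMap (hrow : ∀ i, 0 < A i) (hcol : ∀ j, 0 < Aᵀ j) (p : Fin n → ℝ) :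
    HasStrictFDerivAt (hotsMap A) (hotsJac A p).mulVecLin.toContinuousLinearMap p := by
  refine hasStrictFDerivAt_pi'.mpr fun i => ?_
  simp only [hotsMap_apply]
  have col_deriv := hasStrictFDerivAt_logSumExp (expSum_pos (hcol i) p).ne'
  have row_deriv := (hasStrictFDerivAt_logSumExp (expSum_pos (hrow i) (-p)).ne').comp p
    (hasStrictFDerivAt_id p).neg
  refine ((col_deriv.sub row_deriv).const_mul (1 / 2)).congr_fderiv ?_
  ext v
  calc (1 / 2) * (softmax (Aᵀ i) p ⬝ᵥ v - softmax (A i) (-p) ⬝ᵥ -v)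
      = midpoint ℝ (softmax (Aᵀ i) p) (softmax (A i) (-p)) ⬝ᵥ v := by
        simp [midpoint_eq_smul_add, add_dotProduct, smul_dotProduct, mul_add]
    _ = (hotsJac A p *ᵥ v) i := by rw [← hotsJac_row]; rfl

theorem hotsJac_mem_rowStochastic (hrow : ∀ i, 0 < A i) (hcol : ∀ j, 0 < Aᵀ j) (p : Fin n → ℝ) :
    hotsJac A p ∈ Matrix.rowStochastic ℝ (Fin n) := by
  have row_mem (i : Fin n) : hotsJac A p i ∈ stdSimplex ℝ (Fin n) := by
    rw [hotsJac_row]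
    exact (convex_stdSimplex ℝ (Fin n)).midpoint_mem (softmax_mem_stdSimplex (hcol i) p)
      (softmax_mem_stdSimplex (hrow i) (-p))
  exact Matrix.mem_rowStochastic_iff_sum.mpr ⟨fun i => (row_mem i).1, fun i => (row_mem i).2⟩

end HotsMap

/-- The ideal HOTS map is continuously differentiable, its Jacobian at `p` is `P(p)`,
and `P(p)` is a row-stochastic nonnegative matrix. -/
theorem hotsMap_contDiff_jacobian {n : ℕ} (A : Matrix (Fin n) (Fin n) ℝ)
    (hA : ∀ i j, 0 ≤ A i j)
    (hrow : ∀ i, ∃ j, 0 < A i j) (hcol : ∀ j, ∃ i, 0 < A i j) :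
    ContDiff ℝ 1 (hotsMap A) ∧
    (∀ p : Fin n → ℝ, ∀ f' : (Fin n → ℝ) →L[ℝ] (Fin n → ℝ),
      HasFDerivAt (hotsMap A) f' p → ∀ x, f' x = (hotsJac A p).mulVec x) ∧
    (∀ p : Fin n → ℝ, DifferentiableAt ℝ (hotsMap A) p) ∧
    (∀ p : Fin n → ℝ, (∀ i j, 0 ≤ hotsJac A p i j) ∧ ∀ i, ∑ j, hotsJac A p i j = 1) := by
  have hrow_pos (i : Fin n) : 0 < A i := Pi.lt_def.mpr ⟨hA i, hrow i⟩
  have hcol_pos (j : Fin n) : 0 < Aᵀ j := Pi.lt_def.mpr ⟨fun i => hA i j, hcol j⟩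
  have hderiv (p : Fin n → ℝ) :
      HasFDerivAt (hotsMap A) (hotsJac A p).mulVecLin.toContinuousLinearMap p :=
    (hasStrictFDerivAt_hotsMap hrow_pos hcol_pos p).hasFDerivAt
  refine ⟨contDiff_hotsMap hrow_pos hcol_pos, fun p f' hf' x => ?_,
    fun p => (hderiv p).differentiableAt, fun p => ?_⟩
  · rw [hf'.unique (hderiv p)]
    rfl
  · exact Matrix.mem_rowStochastic_iff_sum.mp (hotsJac_mem_rowStochastic hrow_pos hcol_pos p)
end

section
/- Let g : (0,∞)ⁿ → (0,∞)ⁿ be defined by g_i(x) = ((Σ_j A_{ji} x_j)/(Σ_k A_{ik} x_k^{−1}))^{1/2} (the multiplicative form of the ideal HOTS map). Then for all positive vectors x, y ∈ (0,∞)ⁿ, d(g(x), g(y)) ≤ ((k(Aᵀ) + k(A))/2)·d(x, y), where d is Hilbert's projective metric and k(M) denotes the Birkhoff contraction factor of a nonnegative matrix M with no zero row, k(M) = sup{ d(Mx, My)/d(x, y) : x, y ∈ (0,∞)ⁿ, d(x, y) > 0 }. -/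
open BigOperators Matrix

/-- Hilbert's projective metric `d(x, y) = log(max_{i,j} (x_i y_j)/(y_i x_j))`. -/
noncomputable def hilbertDist {n : ℕ} (x y : Fin n → ℝ) : ℝ :=
  Real.log (⨆ i : Fin n, ⨆ j : Fin n, x i * y j / (y i * x j))

/-- The Birkhoff contraction factor of a nonnegative matrix `M`:
`k(M) = sup{ d(Mx, My)/d(x, y) : x, y positive, d(x, y) > 0 }`. -/
noncomputable def birkhoffFactor {n : ℕ} (M : Matrix (Fin n) (Fin n) ℝ) : ℝ :=
  sSup {r : ℝ | ∃ x y : Fin n → ℝ, (∀ i, 0 < x i) ∧ (∀ i, 0 < y i) ∧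
    0 < hilbertDist x y ∧ r = hilbertDist (M.mulVec x) (M.mulVec y) / hilbertDist x y}

/-- The multiplicative form of the ideal HOTS map. -/
noncomputable def hotsMapMul {n : ℕ} (A : Matrix (Fin n) (Fin n) ℝ) (x : Fin n → ℝ) :
    Fin n → ℝ :=
  fun i => Real.sqrt ((∑ j, A j i * x j) / (∑ k, A i k * (x k)⁻¹))

/-!
Write `g x = (Aᵀx / Ax⁻¹) ^ (1/2)`, with inverse, quotient and power taken entrywise. Entrywise
inversion preserves Hilbert's metric up to swapping the arguments, the metric is subadditive under
entrywise products, and the power `1/2` halves distances, so `Aᵀ` and `A` each contribute half of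
their Birkhoff factor. The supremum defining that factor is finite because the inequalities
`x i * y j ≤ C * (y i * x j)`, which say that `d(x, y) ≤ log C`, pass to nonnegative combinations.
-/

section HilbertDist

variable {n : ℕ} {x y z w : Fin n → ℝ}

lemma hilbertDist_le {c : ℝ} (hx : ∀ i, 0 < x i) (hy : ∀ i, 0 < y i) (hc : 0 ≤ c)
    (h : ∀ i j, x i * y j ≤ Real.exp c * (y i * x j)) : hilbertDist x y ≤ c := by
  have hden : ∀ i j, 0 < y i * x j := fun i j => mul_pos (hy i) (hx j)
  have hsup_nonneg : 0 ≤ ⨆ i, ⨆ j, x i * y j / (y i * x j) :=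
    Real.iSup_nonneg fun i => Real.iSup_nonneg fun j =>
      div_nonneg (mul_pos (hx i) (hy j)).le (hden i j).le
  have hsup_le : ⨆ i, ⨆ j, x i * y j / (y i * x j) ≤ Real.exp c :=
    Real.iSup_le (fun i => Real.iSup_le (fun j => (div_le_iff₀ (hden i j)).2 (h i j))
      (Real.exp_pos c).le) (Real.exp_pos c).le
  rw [hilbertDist]
  -- The supremum vanishes when `n = 0`; then its logarithm is `0` as well.
  rcases hsup_nonneg.eq_or_lt with hsup | hsup
  · rwa [← hsup, Real.log_zero]
  · exact (Real.log_le_iff_le_exp hsup).2 hsup_le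

lemma mul_le_exp_hilbertDist_mul (hx : ∀ i, 0 < x i) (hy : ∀ i, 0 < y i) (i j : Fin n) :
    x i * y j ≤ Real.exp (hilbertDist x y) * (y i * x j) := by
  have hden : 0 < y i * x j := mul_pos (hy i) (hx j)
  have hle : x i * y j / (y i * x j) ≤ ⨆ k, ⨆ l, x k * y l / (y k * x l) :=
    le_ciSup_of_le (Set.finite_range _).bddAbove i
      (le_ciSup (f := fun l => x i * y l / (y i * x l)) (Set.finite_range _).bddAbove j)
  have hsup : 0 < ⨆ k, ⨆ l, x k * y l / (y k * x l) :=
    (div_pos (mul_pos (hx i) (hy j)) hden).trans_le hle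
  rwa [hilbertDist, Real.exp_log hsup, ← div_le_iff₀ hden]

lemma hilbertDist_nonneg (hx : ∀ i, 0 < x i) (hy : ∀ i, 0 < y i) : 0 ≤ hilbertDist x y := by
  rcases isEmpty_or_nonempty (Fin n) with _ | ⟨⟨i⟩⟩
  · simp [hilbertDist]
  · have h := mul_le_exp_hilbertDist_mul hx hy i i
    rw [mul_comm (x i), le_mul_iff_one_le_left (mul_pos (hy i) (hx i))] at h
    exact Real.one_le_exp_iff.1 h

lemma hilbertDist_inv_inv (x y : Fin n → ℝ) : hilbertDist x⁻¹ y⁻¹ = hilbertDist y x := by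
  have h : ∀ i j, x⁻¹ i * y⁻¹ j / (y⁻¹ i * x⁻¹ j) = y i * x j / (x i * y j) := fun i j => by
    simp only [Pi.inv_apply, div_eq_mul_inv, mul_inv, inv_inv]
    ring
  simp only [hilbertDist, h]

lemma hilbertDist_mul_mul_le (hx : ∀ i, 0 < x i) (hy : ∀ i, 0 < y i) (hz : ∀ i, 0 < z i)
    (hw : ∀ i, 0 < w i) :
    hilbertDist (x * z) (y * w) ≤ hilbertDist x y + hilbertDist z w := by
  refine hilbertDist_le (fun i => mul_pos (hx i) (hz i)) (fun i => mul_pos (hy i) (hw i))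
    (add_nonneg (hilbertDist_nonneg hx hy) (hilbertDist_nonneg hz hw)) fun i j => ?_
  calc (x i * z i) * (y j * w j) = (x i * y j) * (z i * w j) := by ring
    _ ≤ (Real.exp (hilbertDist x y) * (y i * x j)) *
          (Real.exp (hilbertDist z w) * (w i * z j)) :=
        mul_le_mul (mul_le_exp_hilbertDist_mul hx hy i j)
          (mul_le_exp_hilbertDist_mul hz hw i j) (mul_pos (hz i) (hw j)).le
          (mul_pos (Real.exp_pos _) (mul_pos (hy i) (hx j))).le
    _ = Real.exp (hilbertDist x y + hilbertDist z w) * ((y i * w i) * (x j * z j)) := by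
        rw [Real.exp_add]
        ring

lemma hilbertDist_div_div_le (hx : ∀ i, 0 < x i) (hy : ∀ i, 0 < y i) (hz : ∀ i, 0 < z i)
    (hw : ∀ i, 0 < w i) :
    hilbertDist (x / z) (y / w) ≤ hilbertDist x y + hilbertDist w z := by
  rw [div_eq_mul_inv, div_eq_mul_inv, ← hilbertDist_inv_inv z w]
  exact hilbertDist_mul_mul_le hx hy (fun i => inv_pos.2 (hz i)) fun i => inv_pos.2 (hw i)

lemma hilbertDist_rpow_le {p : ℝ} (hx : ∀ i, 0 < x i) (hy : ∀ i, 0 < y i) (hp : 0 ≤ p) :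
    hilbertDist (fun i => x i ^ p) (fun i => y i ^ p) ≤ p * hilbertDist x y := by
  refine hilbertDist_le (fun i => Real.rpow_pos_of_pos (hx i) p)
    (fun i => Real.rpow_pos_of_pos (hy i) p) (mul_nonneg hp (hilbertDist_nonneg hx hy))
    fun i j => ?_
  calc x i ^ p * y j ^ p = (x i * y j) ^ p := (Real.mul_rpow (hx i).le (hy j).le).symm
    _ ≤ (Real.exp (hilbertDist x y) * (y i * x j)) ^ p :=
        Real.rpow_le_rpow (mul_pos (hx i) (hy j)).le (mul_le_exp_hilbertDist_mul hx hy i j) hp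
    _ = Real.exp (p * hilbertDist x y) * (y i ^ p * x j ^ p) := by
        rw [Real.mul_rpow (Real.exp_pos _).le (mul_pos (hy i) (hx j)).le,
          Real.mul_rpow (hy i).le (hx j).le, ← Real.exp_mul, mul_comm p]

end HilbertDist

lemma mulVec_pos_of_exists_pos {ι κ R : Type*} [Fintype κ] [Semiring R] [PartialOrder R]
    [IsStrictOrderedRing R] {M : Matrix ι κ R} {x : κ → R}
    (hM : ∀ i j, 0 ≤ M i j) (hrow : ∀ i, ∃ j, 0 < M i j) (hx : ∀ j, 0 < x j) (i : ι) :
    0 < (M *ᵥ x) i := by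
  obtain ⟨j, hj⟩ := hrow i
  exact Finset.sum_pos' (fun k _ => mul_nonneg (hM i k) (hx k).le)
    ⟨j, Finset.mem_univ j, mul_pos hj (hx j)⟩

lemma mulVec_mul_mulVec_le {ι κ R : Type*} [Fintype κ] [CommSemiring R] [PartialOrder R]
    [IsOrderedRing R] {M : Matrix ι κ R} {x y : κ → R} {C : R}
    (hM : ∀ i j, 0 ≤ M i j) (h : ∀ k l, x k * y l ≤ C * (y k * x l)) (i j : ι) :
    (M *ᵥ x) i * (M *ᵥ y) j ≤ C * ((M *ᵥ y) i * (M *ᵥ x) j) := by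
  simp only [mulVec, dotProduct]
  rw [Finset.sum_mul_sum, Finset.sum_mul_sum]
  simp only [Finset.mul_sum]
  refine Finset.sum_le_sum fun k _ => Finset.sum_le_sum fun l _ => ?_
  calc M i k * x k * (M j l * y l) = M i k * M j l * (x k * y l) := by ring
    _ ≤ M i k * M j l * (C * (y k * x l)) :=
        mul_le_mul_of_nonneg_left (h k l) (mul_nonneg (hM i k) (hM j l))
    _ = C * (M i k * y k * (M j l * x l)) := by ring

lemma hilbertDist_mulVec_le {m n : ℕ} {M : Matrix (Fin m) (Fin n) ℝ} {x y : Fin n → ℝ}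
    (hM : ∀ i j, 0 ≤ M i j) (hrow : ∀ i, ∃ j, 0 < M i j) (hx : ∀ j, 0 < x j)
    (hy : ∀ j, 0 < y j) : hilbertDist (M *ᵥ x) (M *ᵥ y) ≤ hilbertDist x y :=
  hilbertDist_le (mulVec_pos_of_exists_pos hM hrow hx) (mulVec_pos_of_exists_pos hM hrow hy)
    (hilbertDist_nonneg hx hy) (mulVec_mul_mulVec_le hM (mul_le_exp_hilbertDist_mul hx hy))

lemma hilbertDist_mulVec_le_birkhoffFactor_mul {n : ℕ} {M : Matrix (Fin n) (Fin n) ℝ}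
    {x y : Fin n → ℝ} (hM : ∀ i j, 0 ≤ M i j) (hrow : ∀ i, ∃ j, 0 < M i j)
    (hx : ∀ j, 0 < x j) (hy : ∀ j, 0 < y j) :
    hilbertDist (M *ᵥ x) (M *ᵥ y) ≤ birkhoffFactor M * hilbertDist x y := by
  rcases (hilbertDist_nonneg hx hy).eq_or_lt with hxy | hxy
  · simpa only [← hxy, mul_zero] using hilbertDist_mulVec_le hM hrow hx hy
  · rw [← div_le_iff₀ hxy]
    refine le_csSup ⟨1, ?_⟩ ⟨x, y, hx, hy, hxy, rfl⟩
    rintro _ ⟨u, v, hu, hv, huv, rfl⟩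
    exact (div_le_one huv).2 (hilbertDist_mulVec_le hM hrow hu hv)

lemma hotsMapMul_eq_rpow {n : ℕ} (A : Matrix (Fin n) (Fin n) ℝ) (x : Fin n → ℝ) :
    hotsMapMul A x = fun i => (Aᵀ *ᵥ x / A *ᵥ x⁻¹) i ^ (1 / 2 : ℝ) :=
  funext fun _ => Real.sqrt_eq_rpow _

/-- The ideal HOTS map is `((k(Aᵀ) + k(A))/2)`-contracting in Hilbert's projective metric. -/
theorem hotsMapMul_hilbert_contraction {n : ℕ} (hn : 0 < n)
    (A : Matrix (Fin n) (Fin n) ℝ) (hA : ∀ i j, 0 ≤ A i j)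
    (hrow : ∀ i, ∃ j, 0 < A i j) (hcol : ∀ j, ∃ i, 0 < A i j) :
    ∀ x y : Fin n → ℝ, (∀ i, 0 < x i) → (∀ i, 0 < y i) →
      hilbertDist (hotsMapMul A x) (hotsMapMul A y) ≤
        (birkhoffFactor Aᵀ + birkhoffFactor A) / 2 * hilbertDist x y := by
  intro x y hx hy
  have hAT : ∀ i j, 0 ≤ Aᵀ i j := fun i j => hA j i
  have hx_inv : ∀ i, 0 < x⁻¹ i := fun i => inv_pos.2 (hx i)
  have hy_inv : ∀ i, 0 < y⁻¹ i := fun i => inv_pos.2 (hy i)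
  have hnum_x := mulVec_pos_of_exists_pos hAT hcol hx
  have hnum_y := mulVec_pos_of_exists_pos hAT hcol hy
  have hden_x := mulVec_pos_of_exists_pos hA hrow hx_inv
  have hden_y := mulVec_pos_of_exists_pos hA hrow hy_inv
  have hnum := hilbertDist_mulVec_le_birkhoffFactor_mul hAT hcol hx hy
  have hden := hilbertDist_mulVec_le_birkhoffFactor_mul hA hrow hy_inv hx_inv
  rw [hilbertDist_inv_inv] at hden
  rw [hotsMapMul_eq_rpow, hotsMapMul_eq_rpow]
  calc
    _ ≤ 1 / 2 * hilbertDist (Aᵀ *ᵥ x / A *ᵥ x⁻¹) (Aᵀ *ᵥ y / A *ᵥ y⁻¹) :=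
        hilbertDist_rpow_le (fun i => div_pos (hnum_x i) (hden_x i))
          (fun i => div_pos (hnum_y i) (hden_y i)) one_half_pos.le
    _ ≤ 1 / 2 * (hilbertDist (Aᵀ *ᵥ x) (Aᵀ *ᵥ y) + hilbertDist (A *ᵥ y⁻¹) (A *ᵥ x⁻¹)) := by
        gcongr
        exact hilbertDist_div_div_le hnum_x hnum_y hden_x hden_y
    _ ≤ 1 / 2 * (birkhoffFactor Aᵀ * hilbertDist x y + birkhoffFactor A * hilbertDist x y) := by
        gcongr
    _ = (birkhoffFactor Aᵀ + birkhoffFactor A) / 2 * hilbertDist x y := by ring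
end

section
/- For every p ∈ ℝⁿ, θ(f(p)) ≤ θ(p), where θ(q) = Σ_{i,j=1}^n A_{ij} e^{q_i − q_j}. In other words, θ is a Lyapunov function for the ideal HOTS iteration: each application of f does not increase the dual objective value. -/
open BigOperators

/-!
Decouple the two occurrences of `q` in `θ(q)`: put `F(u, v) = ∑ᵢⱼ Aᵢⱼ exp (uᵢ - vⱼ)`, so that
`θ(q) = F(q, q)`. With `f = f(p)` and `g = 2 f - p`, the point `(f, f)` is the midpoint of `(g, p)`
and `(p, g)`, and `F` is convex. The definition of `f` says `exp (2 fᵢ) rᵢ = cᵢ`, where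
`rᵢ = ∑ⱼ Aᵢⱼ exp (-pⱼ)` and `cᵢ = ∑ⱼ Aⱼᵢ exp pⱼ`; hence `F(g, p) = ∑ᵢ exp (gᵢ) rᵢ =
∑ᵢ exp (-pᵢ) cᵢ = θ(p)`, and `F(p, g) = θ(p)` by the symmetry `(A, p) ↦ (Aᵀ, -p)`.
-/

section CrossObjective

variable {m n : Type*} [Fintype m] [Fintype n]

/-- The two-variable version `F(u, v) = ∑ᵢⱼ Aᵢⱼ exp (uᵢ - vⱼ)` of the dual objective, whose
restriction to the diagonal is `θ`. -/
noncomputable def crossObjective (A : Matrix m n ℝ) (u : m → ℝ) (v : n → ℝ) : ℝ :=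
  ∑ i, ∑ j, A i j * Real.exp (u i - v j)

theorem crossObjective_transpose_neg (A : Matrix m n ℝ) (u : m → ℝ) (v : n → ℝ) :
    crossObjective A.transpose (-v) (-u) = crossObjective A u v := by
  simp only [crossObjective, Matrix.transpose_apply, Pi.neg_apply, neg_sub_neg]
  exact Finset.sum_comm

theorem crossObjective_eq_sum_exp_mul_row (A : Matrix m n ℝ) (u : m → ℝ) (v : n → ℝ) :
    crossObjective A u v = ∑ i, Real.exp (u i) * ∑ j, A i j * Real.exp (-v j) := by
  simp only [crossObjective, sub_eq_add_neg, Real.exp_add, Finset.mul_sum, mul_left_comm]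

theorem crossObjective_eq_sum_exp_mul_col (A : Matrix m n ℝ) (u : m → ℝ) (v : n → ℝ) :
    crossObjective A u v = ∑ j, Real.exp (-v j) * ∑ i, A i j * Real.exp (u i) := by
  rw [← crossObjective_transpose_neg, crossObjective_eq_sum_exp_mul_row]
  simp only [Matrix.transpose_apply, Pi.neg_apply, neg_neg]

theorem convexOn_crossObjective {A : Matrix m n ℝ} (hA : ∀ i j, 0 ≤ A i j) :
    ConvexOn ℝ Set.univ fun w : (m → ℝ) × (n → ℝ) => crossObjective A w.1 w.2 := by
  refine ⟨convex_univ, fun x _ y _ a b ha hb hab => ?_⟩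
  simp only [crossObjective, Finset.smul_sum, ← Finset.sum_add_distrib]
  gcongr with i _ j _
  have hexp := convexOn_exp.2 (Set.mem_univ (x.1 i - x.2 j)) (Set.mem_univ (y.1 i - y.2 j))
    ha hb hab
  calc A i j * Real.exp ((a • x + b • y).1 i - (a • x + b • y).2 j)
      = A i j * Real.exp (a • (x.1 i - x.2 j) + b • (y.1 i - y.2 j)) := by
        congr 2
        simp only [Prod.fst_add, Prod.snd_add, Prod.smul_fst, Prod.smul_snd, Pi.add_apply,
          Pi.smul_apply, smul_eq_mul]
        ring
    _ ≤ A i j * (a • Real.exp (x.1 i - x.2 j) + b • Real.exp (y.1 i - y.2 j)) :=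
        mul_le_mul_of_nonneg_left hexp (hA i j)
    _ = a • (A i j * Real.exp (x.1 i - x.2 j)) + b • (A i j * Real.exp (y.1 i - y.2 j)) := by
        simp only [smul_eq_mul]
        ring

theorem crossObjective_self_le_average_reflection {A : Matrix m m ℝ} (hA : ∀ i j, 0 ≤ A i j)
    (f p : m → ℝ) :
    crossObjective A f f ≤
      (crossObjective A ((2 : ℝ) • f - p) p + crossObjective A p ((2 : ℝ) • f - p)) / 2 := by
  have hmid : (f, f) = (1 / 2 : ℝ) • ((2 : ℝ) • f - p, p) + (1 / 2 : ℝ) • (p, (2 : ℝ) • f - p) := by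
    simp only [Prod.smul_mk, Prod.mk_add_mk, Prod.mk.injEq]
    constructor <;> module
  have hconv := (convexOn_crossObjective hA).2 (Set.mem_univ ((2 : ℝ) • f - p, p))
    (Set.mem_univ (p, (2 : ℝ) • f - p)) one_half_pos.le one_half_pos.le (add_halves 1)
  simp only [← hmid, smul_eq_mul] at hconv
  linarith

end CrossObjective

theorem sum_mul_exp_pos {ι : Type*} [Fintype ι] {a : ι → ℝ} (ha : ∀ j, 0 ≤ a j)
    (hpos : ∃ j, 0 < a j) (x : ι → ℝ) : 0 < ∑ j, a j * Real.exp (x j) :=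
  Finset.sum_pos' (fun j _ => mul_nonneg (ha j) (Real.exp_pos _).le)
    (hpos.imp fun _ hj => ⟨Finset.mem_univ _, mul_pos hj (Real.exp_pos _)⟩)

section HotsMap

variable {n : ℕ} {A : Matrix (Fin n) (Fin n) ℝ} {p : Fin n → ℝ}

theorem hotsMap_transpose_neg (A : Matrix (Fin n) (Fin n) ℝ) (p : Fin n → ℝ) :
    hotsMap A.transpose (-p) = -hotsMap A p := by
  ext i
  simp only [hotsMap, Matrix.transpose_apply, Pi.neg_apply, neg_neg]
  ring

theorem exp_two_mul_hotsMap_mul_row {i : Fin n} (hrow : 0 < ∑ j, A i j * Real.exp (-p j))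
    (hcol : 0 < ∑ j, A j i * Real.exp (p j)) :
    Real.exp (2 * hotsMap A p i) * ∑ j, A i j * Real.exp (-p j) =
      ∑ j, A j i * Real.exp (p j) := by
  rw [hotsMap, ← mul_assoc, mul_one_div_cancel two_ne_zero, one_mul, Real.exp_sub,
    Real.exp_log hcol, Real.exp_log hrow, div_mul_cancel₀ _ hrow.ne']

theorem crossObjective_hotsMap_reflection_left
    (hrow : ∀ i, 0 < ∑ j, A i j * Real.exp (-p j)) (hcol : ∀ i, 0 < ∑ j, A j i * Real.exp (p j)) :
    crossObjective A ((2 : ℝ) • hotsMap A p - p) p = crossObjective A p p := by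
  rw [crossObjective_eq_sum_exp_mul_row, crossObjective_eq_sum_exp_mul_col]
  refine Finset.sum_congr rfl fun i _ => ?_
  rw [← exp_two_mul_hotsMap_mul_row (hrow i) (hcol i), ← mul_assoc, ← Real.exp_add,
    neg_add_eq_sub, Pi.sub_apply, Pi.smul_apply, smul_eq_mul]

theorem crossObjective_hotsMap_reflection_right
    (hrow : ∀ i, 0 < ∑ j, A i j * Real.exp (-p j)) (hcol : ∀ i, 0 < ∑ j, A j i * Real.exp (p j)) :
    crossObjective A p ((2 : ℝ) • hotsMap A p - p) = crossObjective A p p := by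
  have hneg : -((2 : ℝ) • hotsMap A p - p) = (2 : ℝ) • hotsMap A.transpose (-p) - -p := by
    rw [hotsMap_transpose_neg, smul_neg, neg_sub']
  rw [← crossObjective_transpose_neg, hneg, crossObjective_hotsMap_reflection_left,
    crossObjective_transpose_neg]
  · simpa only [Matrix.transpose_apply, Pi.neg_apply, neg_neg] using hcol
  · simpa only [Matrix.transpose_apply, Pi.neg_apply] using hrow

end HotsMap

/-- The dual objective `θ(q) = Σ_{i,j} A_{ij} e^{q_i − q_j}` is a Lyapunov function for the
ideal HOTS iteration: `θ(f(p)) ≤ θ(p)`. -/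
theorem hots_lyapunov {n : ℕ} (A : Matrix (Fin n) (Fin n) ℝ)
    (hA : ∀ i j, 0 ≤ A i j)
    (hrow : ∀ i, ∃ j, 0 < A i j) (hcol : ∀ j, ∃ i, 0 < A i j) (p : Fin n → ℝ) :
    (∑ i, ∑ j, A i j * Real.exp (hotsMap A p i - hotsMap A p j)) ≤
      ∑ i, ∑ j, A i j * Real.exp (p i - p j) := by
  have hrow_pos : ∀ i, 0 < ∑ j, A i j * Real.exp (-p j) := fun i =>
    sum_mul_exp_pos (hA i) (hrow i) (-p)
  have hcol_pos : ∀ i, 0 < ∑ j, A j i * Real.exp (p j) := fun i =>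
    sum_mul_exp_pos (fun j => hA j i) (hcol i) p
  calc crossObjective A (hotsMap A p) (hotsMap A p)
      ≤ (crossObjective A ((2 : ℝ) • hotsMap A p - p) p +
          crossObjective A p ((2 : ℝ) • hotsMap A p - p)) / 2 :=
        crossObjective_self_le_average_reflection hA _ _
    _ = crossObjective A p p := by
        rw [crossObjective_hotsMap_reflection_left hrow_pos hcol_pos,
          crossObjective_hotsMap_reflection_right hrow_pos hcol_pos, add_self_div_two]
end

section
/- Let n = 3 and let A be the 3×3 matrix with A_{12} = A_{23} = 1 and all other entries 0. Then for every α ∈ (3/4, 1), the effective HOTS dual function θ is unbounded below: inf{ θ(p, μ, a, b) : p ∈ ℝ⁴, (μ, a, b) ∈ ℝ³ } = −∞. -/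
open BigOperators

/-- The effective HOTS dual function. -/
noncomputable def effDual {n : ℕ} (A : Matrix (Fin n) (Fin n) ℝ) (α : ℝ)
    (p : Fin (n + 1) → ℝ) (μ a b : ℝ) : ℝ :=
  (∑ i : Fin n, ∑ j : Fin n, A i j * Real.exp (p i.castSucc - p j.castSucc + μ))
    + (∑ i : Fin n, Real.exp (-b - p (Fin.last n) + p i.castSucc + μ))
    + (∑ j : Fin n, Real.exp (a + p (Fin.last n) - p j.castSucc + μ))
    - (1 - α) * a - μ + (1 - α) * b

/-!
Along a ray on which every exponent is nonpositive, the exponential part of `effDual` stays bounded,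
so `effDual` tends to `-∞` as soon as its linear part decreases. When the digraph of `A` is acyclic,
a height function `h` that grows by at least `1` along each edge gives such a ray: `p = (h, 0)`
allows `μ = 1`, and if `h` takes values in `[0, ℓ]` then `a = -1` and `b = ℓ + 1` keep the remaining
exponents nonpositive. The slope of the linear part is then `(1 - α) * (ℓ + 2) - 1`, and the path
`1 → 2 → 3` has `ℓ = 2`.
-/

theorem mul_exp_le_posPart {c x : ℝ} (h : 0 < c → x ≤ 0) : c * Real.exp x ≤ c⁺ := by
  rcases le_or_gt c 0 with hc | hc
  · exact (mul_nonpos_of_nonpos_of_nonneg hc (Real.exp_nonneg x)).trans (posPart_nonneg c)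
  · exact (mul_le_of_le_one_right hc.le (Real.exp_le_one_iff.2 (h hc))).trans (le_posPart c)

theorem sum_exp_le_card {ι : Type*} [Fintype ι] {f : ι → ℝ} (hf : ∀ i, f i ≤ 0) :
    ∑ i, Real.exp (f i) ≤ Fintype.card ι := by
  simpa using Finset.sum_le_card_nsmul Finset.univ (fun i ↦ Real.exp (f i)) 1
    fun i _ ↦ Real.exp_le_one_iff.2 (hf i)

section RecessionDirection

variable {n : ℕ} {A : Matrix (Fin n) (Fin n) ℝ} {p : Fin (n + 1) → ℝ} {μ a b : ℝ}

/-- `(p, μ, a, b)` is a direction along which no exponential in `effDual A` with a positive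
coefficient grows. Entries `A i j ≤ 0` impose nothing: their terms are at most `0`. -/
structure IsExpRecessionDirection (A : Matrix (Fin n) (Fin n) ℝ) (p : Fin (n + 1) → ℝ)
    (μ a b : ℝ) : Prop where
  edge_nonpos : ∀ i j, 0 < A i j → p i.castSucc - p j.castSucc + μ ≤ 0
  to_last_nonpos : ∀ i : Fin n, -b - p (Fin.last n) + p i.castSucc + μ ≤ 0
  from_last_nonpos : ∀ j : Fin n, a + p (Fin.last n) - p j.castSucc + μ ≤ 0

namespace IsExpRecessionDirection

theorem smul (h : IsExpRecessionDirection A p μ a b) {t : ℝ} (ht : 0 ≤ t) :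
    IsExpRecessionDirection A (t • p) (t * μ) (t * a) (t * b) where
  edge_nonpos i j hij := by
    simpa [mul_add, mul_sub] using mul_nonpos_of_nonneg_of_nonpos ht (h.edge_nonpos i j hij)
  to_last_nonpos i := by
    simpa [mul_add, mul_sub] using mul_nonpos_of_nonneg_of_nonpos ht (h.to_last_nonpos i)
  from_last_nonpos j := by
    simpa [mul_add, mul_sub] using mul_nonpos_of_nonneg_of_nonpos ht (h.from_last_nonpos j)

theorem effDual_le (h : IsExpRecessionDirection A p μ a b) (α : ℝ) :
    effDual A α p μ a b ≤ (∑ i, ∑ j, (A i j)⁺) + 2 * n - (μ - (1 - α) * (b - a)) := by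
  have edge_sum_le : ∑ i : Fin n, ∑ j : Fin n,
      A i j * Real.exp (p i.castSucc - p j.castSucc + μ) ≤ ∑ i, ∑ j, (A i j)⁺ :=
    Finset.sum_le_sum fun i _ ↦ Finset.sum_le_sum fun j _ ↦ mul_exp_le_posPart (h.edge_nonpos i j)
  have to_last_sum_le := sum_exp_le_card h.to_last_nonpos
  have from_last_sum_le := sum_exp_le_card h.from_last_nonpos
  rw [Fintype.card_fin] at to_last_sum_le from_last_sum_le
  unfold effDual
  linarith

theorem exists_effDual_lt (h : IsExpRecessionDirection A p μ a b) {α : ℝ}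
    (hslope : (1 - α) * (b - a) < μ) (C : ℝ) :
    ∃ (p : Fin (n + 1) → ℝ) (μ a b : ℝ), effDual A α p μ a b < C := by
  obtain ⟨t, ht⟩ :=
    exists_nat_gt (((∑ i, ∑ j, (A i j)⁺) + 2 * n - C) / (μ - (1 - α) * (b - a)))
  rw [div_lt_iff₀ (sub_pos.2 hslope)] at ht
  refine ⟨(t : ℝ) • p, t * μ, t * a, t * b, ?_⟩
  calc effDual A α ((t : ℝ) • p) (t * μ) (t * a) (t * b)
      ≤ (∑ i, ∑ j, (A i j)⁺) + 2 * n - (t * μ - (1 - α) * (t * b - t * a)) :=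
        (h.smul t.cast_nonneg).effDual_le α
    _ = (∑ i, ∑ j, (A i j)⁺) + 2 * n - t * (μ - (1 - α) * (b - a)) := by ring
    _ < C := by linarith

theorem of_height {h : Fin n → ℝ} {ℓ : ℝ} (h_mem : ∀ i, h i ∈ Set.Icc 0 ℓ)
    (h_edge : ∀ i j, 0 < A i j → h i + 1 ≤ h j) :
    IsExpRecessionDirection A (Fin.snoc h 0 : Fin (n + 1) → ℝ) 1 (-1) (ℓ + 1) where
  edge_nonpos i j hij := by
    simp only [Fin.snoc_castSucc]
    linarith [h_edge i j hij]
  to_last_nonpos i := by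
    simp only [Fin.snoc_castSucc, Fin.snoc_last]
    linarith [(h_mem i).2]
  from_last_nonpos j := by
    simp only [Fin.snoc_castSucc, Fin.snoc_last]
    linarith [(h_mem j).1]

end IsExpRecessionDirection

end RecessionDirection

theorem effDual_unbounded_counterexample_general {n : ℕ} {A : Matrix (Fin n) (Fin n) ℝ}
    {h : Fin n → ℝ} {ℓ α : ℝ} (h_mem : ∀ i, h i ∈ Set.Icc 0 ℓ)
    (h_edge : ∀ i j, 0 < A i j → h i + 1 ≤ h j) (hα : (1 - α) * (ℓ + 2) < 1) (C : ℝ) :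
    ∃ (p : Fin (n + 1) → ℝ) (μ a b : ℝ), effDual A α p μ a b < C :=
  (IsExpRecessionDirection.of_height h_mem h_edge).exists_effDual_lt (by linarith) C

/-- For the 3×3 matrix with `A₁₂ = A₂₃ = 1` and all other entries `0`, the effective HOTS
dual function is unbounded below whenever `3/4 < α < 1`. -/
theorem effDual_unbounded_counterexample (α : ℝ) (hα₁ : 3 / 4 < α) (hα₂ : α < 1) :
    ∀ C : ℝ, ∃ (p : Fin 4 → ℝ) (μ a b : ℝ),
      effDual (Matrix.of ![![0, 1, 0], ![0, 0, 1], ![0, 0, 0]]) α p μ a b < C :=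
  effDual_unbounded_counterexample_general (h := ![0, 1, 2]) (ℓ := 2)
    (by simp [Fin.forall_fin_succ]) (by norm_num [Fin.forall_fin_succ]) (by linarith)
end

section
/- For every fixed p ∈ ℝ^{n+1}, the function (μ, a, b) ↦ θ(p, μ, a, b) has a unique global minimizer over ℝ³, given by μ = log((2α−1)/σ(p)), a = log(γσ(p)/Σ_{j=1}^n e^{p_{n+1} − p_j}), b = −log(γσ(p)/Σ_{i=1}^n e^{p_i − p_{n+1}}), where σ(p) = Σ_{i,j=1}^n A_{ij} e^{p_i − p_j}. -/
open BigOperators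

/-- `σ(p) = Σ_{i,j} A_{ij} e^{p_i − p_j}`. -/
noncomputable def sigmaP {n : ℕ} (A : Matrix (Fin n) (Fin n) ℝ) (p : Fin (n + 1) → ℝ) : ℝ :=
  ∑ i : Fin n, ∑ j : Fin n, A i j * Real.exp (p i.castSucc - p j.castSucc)

/-!
In the variables `x = μ`, `y = μ - b`, `z = a + μ` the dual function separates into
`(σ eˣ - (2α - 1) x) + (R eʸ - (1 - α) y) + (C eᶻ - (1 - α) z)` with
`R = Σ_i e^{p_i − p_{n+1}}` and `C = Σ_j e^{p_{n+1} − p_j}`. Each summand `s eᵗ - c t` with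
`s, c > 0` is minimized exactly at `t = log (c / s)`, because `eᵘ > 1 + u` for `u ≠ 0`.
-/

theorem log_div_mul_div {c d s r : ℝ} (hc : c ≠ 0) (hd : d ≠ 0) (hs : s ≠ 0) (hr : r ≠ 0) :
    Real.log (c / d * s / r) = Real.log (c / r) - Real.log (d / s) := by
  rw [← Real.log_div (div_ne_zero hc hr) (div_ne_zero hd hs)]
  congr 1
  field_simp

/-- The function `t ↦ s eᵗ - c t`, the one-variable summand of the dual function after the change
of variables that separates it. -/
noncomputable def expSubLinear (s c t : ℝ) : ℝ :=
  s * Real.exp t - c * t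

theorem expSubLinear_log_div_lt {s c t : ℝ} (hs : 0 < s) (hc : 0 < c)
    (ht : t ≠ Real.log (c / s)) :
    expSubLinear s c (Real.log (c / s)) < expSubLinear s c t := by
  unfold expSubLinear
  set t₀ := Real.log (c / s)
  have critical : s * Real.exp t₀ = c := by
    rw [Real.exp_log (div_pos hc hs), mul_div_cancel₀ c hs.ne']
  calc s * Real.exp t₀ - c * t₀
      = c * (t - t₀ + 1) - c * t := by rw [critical]; ring
    _ < c * Real.exp (t - t₀) - c * t := by
        gcongr
        exact Real.add_one_lt_exp (sub_ne_zero.mpr ht)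
    _ = s * Real.exp t - c * t := by
        rw [← critical, mul_assoc, ← Real.exp_add, add_sub_cancel]

theorem forall_expSubLinear_le_iff {s c t : ℝ} (hs : 0 < s) (hc : 0 < c) :
    (∀ t', expSubLinear s c t ≤ expSubLinear s c t') ↔ t = Real.log (c / s) := by
  constructor
  · intro h
    by_contra ht
    exact (h _).not_gt (expSubLinear_log_div_lt hs hc ht)
  · rintro rfl t'
    obtain rfl | ht := eq_or_ne t' (Real.log (c / s))
    · rfl
    · exact (expSubLinear_log_div_lt hs hc ht).le

theorem forall_add_add_le_iff {ι κ τ M : Type*} [AddCommMonoid M] [PartialOrder M]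
    [IsOrderedCancelAddMonoid M] {f : ι → M} {g : κ → M} {h : τ → M} {x : ι} {y : κ} {z : τ} :
    (∀ x' y' z', f x + g y + h z ≤ f x' + g y' + h z') ↔
      (∀ x', f x ≤ f x') ∧ (∀ y', g y ≤ g y') ∧ ∀ z', h z ≤ h z' := by
  constructor
  · intro hmin
    exact ⟨fun x' => by simpa using hmin x' y z, fun y' => by simpa using hmin x y' z,
      fun z' => by simpa using hmin x y z'⟩
  · rintro ⟨hf, hg, hh⟩ x' y' z'
    exact add_le_add (add_le_add (hf x') (hg y')) (hh z')

section EffDual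

variable {n : ℕ} {A : Matrix (Fin n) (Fin n) ℝ} {α : ℝ} {p : Fin (n + 1) → ℝ}

theorem sigmaP_pos (hA : ∀ i j, 0 ≤ A i j) (hA0 : A ≠ 0) : 0 < sigmaP A p := by
  have term_nonneg (i j : Fin n) : 0 ≤ A i j * Real.exp (p i.castSucc - p j.castSucc) :=
    mul_nonneg (hA i j) (Real.exp_pos _).le
  obtain ⟨i, j, hij⟩ : ∃ i j, A i j ≠ 0 := by
    contrapose! hA0
    exact Matrix.ext hA0
  calc 0 < A i j * Real.exp (p i.castSucc - p j.castSucc) :=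
        mul_pos ((hA i j).lt_of_ne' hij) (Real.exp_pos _)
    _ ≤ ∑ j, A i j * Real.exp (p i.castSucc - p j.castSucc) :=
        Finset.single_le_sum (fun j _ => term_nonneg i j) (Finset.mem_univ j)
    _ ≤ sigmaP A p :=
        Finset.single_le_sum (f := fun i => ∑ j, A i j * Real.exp (p i.castSucc - p j.castSucc))
          (fun i _ => Finset.sum_nonneg fun j _ => term_nonneg i j) (Finset.mem_univ i)

theorem nonempty_of_sigmaP_ne_zero (hσ : sigmaP A p ≠ 0) : Nonempty (Fin n) := by
  obtain ⟨i, -, -⟩ := Finset.exists_ne_zero_of_sum_ne_zero hσ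
  exact ⟨i⟩

theorem effDual_eq_expSubLinear_add (A : Matrix (Fin n) (Fin n) ℝ) (α : ℝ)
    (p : Fin (n + 1) → ℝ) (μ a b : ℝ) :
    effDual A α p μ a b =
      expSubLinear (sigmaP A p) (2 * α - 1) μ
        + expSubLinear (∑ i : Fin n, Real.exp (p i.castSucc - p (Fin.last n))) (1 - α) (μ - b)
        + expSubLinear (∑ j : Fin n, Real.exp (p (Fin.last n) - p j.castSucc)) (1 - α)
            (a + μ) := by
  have inner_exp (i j : Fin n) : A i j * Real.exp (p i.castSucc - p j.castSucc + μ) =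
      A i j * Real.exp (p i.castSucc - p j.castSucc) * Real.exp μ := by
    rw [Real.exp_add, mul_assoc]
  have row_exp (i : Fin n) : Real.exp (-b - p (Fin.last n) + p i.castSucc + μ) =
      Real.exp (p i.castSucc - p (Fin.last n)) * Real.exp (μ - b) := by
    rw [← Real.exp_add]
    ring_nf
  have col_exp (j : Fin n) : Real.exp (a + p (Fin.last n) - p j.castSucc + μ) =
      Real.exp (p (Fin.last n) - p j.castSucc) * Real.exp (a + μ) := by
    rw [← Real.exp_add]
    ring_nf
  simp only [effDual, expSubLinear, sigmaP, inner_exp, row_exp, col_exp, ← Finset.sum_mul]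
  ring

theorem forall_effDual_le_iff_separated (hσ : 0 < sigmaP A p) (hα₁ : 1 / 2 < α) (hα₂ : α < 1)
    {μ a b : ℝ} :
    (∀ μ' a' b' : ℝ, effDual A α p μ a b ≤ effDual A α p μ' a' b') ↔
      μ = Real.log ((2 * α - 1) / sigmaP A p) ∧
      μ - b = Real.log ((1 - α) / ∑ i : Fin n, Real.exp (p i.castSucc - p (Fin.last n))) ∧
      a + μ = Real.log ((1 - α) / ∑ j : Fin n, Real.exp (p (Fin.last n) - p j.castSucc)) := by
  have := nonempty_of_sigmaP_ne_zero hσ.ne'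
  have row_pos : 0 < ∑ i : Fin n, Real.exp (p i.castSucc - p (Fin.last n)) := by positivity
  have col_pos : 0 < ∑ j : Fin n, Real.exp (p (Fin.last n) - p j.castSucc) := by positivity
  have hd : 0 < 2 * α - 1 := by linarith
  have hc : 0 < 1 - α := by linarith
  rw [← forall_expSubLinear_le_iff hσ hd, ← forall_expSubLinear_le_iff row_pos hc,
    ← forall_expSubLinear_le_iff col_pos hc, ← forall_add_add_le_iff]
  simp only [effDual_eq_expSubLinear_add]
  constructor
  · intro h x y z
    simpa only [sub_sub_cancel, sub_add_cancel] using h x (z - x) (x - y)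
  · exact fun h μ' a' b' => h μ' (μ' - b') (a' + μ')

theorem effDual_unique_multiplier_minimizer_general (hσ : 0 < sigmaP A p) (hα₁ : 1 / 2 < α)
    (hα₂ : α < 1) {μ a b : ℝ} :
    (∀ μ' a' b' : ℝ, effDual A α p μ a b ≤ effDual A α p μ' a' b') ↔
      μ = Real.log ((2 * α - 1) / sigmaP A p) ∧
      a = Real.log ((1 - α) / (2 * α - 1) * sigmaP A p /
            ∑ j : Fin n, Real.exp (p (Fin.last n) - p j.castSucc)) ∧
      b = -Real.log ((1 - α) / (2 * α - 1) * sigmaP A p /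
            ∑ i : Fin n, Real.exp (p i.castSucc - p (Fin.last n))) := by
  have := nonempty_of_sigmaP_ne_zero hσ.ne'
  have hd : 2 * α - 1 ≠ 0 := by linarith
  have hc : 1 - α ≠ 0 := by linarith
  rw [forall_effDual_le_iff_separated hσ hα₁ hα₂, log_div_mul_div hc hd hσ.ne' (by positivity),
    log_div_mul_div hc hd hσ.ne' (by positivity)]
  constructor <;> rintro ⟨hμ, h₁, h₂⟩ <;> refine ⟨hμ, ?_, ?_⟩ <;> linarith

end EffDual

/-- For fixed `p`, the dual function `(μ, a, b) ↦ θ(p, μ, a, b)` has a unique global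
minimizer, given in closed form. -/
theorem effDual_unique_multiplier_minimizer {n : ℕ} (A : Matrix (Fin n) (Fin n) ℝ)
    (hA : ∀ i j, 0 ≤ A i j) (hA0 : A ≠ 0) (α : ℝ) (hα₁ : 1 / 2 < α) (hα₂ : α < 1)
    (p : Fin (n + 1) → ℝ) :
    (∀ μ a b : ℝ,
      effDual A α p (Real.log ((2 * α - 1) / sigmaP A p))
        (Real.log ((1 - α) / (2 * α - 1) * sigmaP A p /
          ∑ j : Fin n, Real.exp (p (Fin.last n) - p j.castSucc)))
        (-Real.log ((1 - α) / (2 * α - 1) * sigmaP A p /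
          ∑ i : Fin n, Real.exp (p i.castSucc - p (Fin.last n)))) ≤
      effDual A α p μ a b) ∧
    ∀ μ a b : ℝ, (∀ μ' a' b' : ℝ, effDual A α p μ a b ≤ effDual A α p μ' a' b') →
      μ = Real.log ((2 * α - 1) / sigmaP A p) ∧
      a = Real.log ((1 - α) / (2 * α - 1) * sigmaP A p /
            ∑ j : Fin n, Real.exp (p (Fin.last n) - p j.castSucc)) ∧
      b = -Real.log ((1 - α) / (2 * α - 1) * sigmaP A p /
            ∑ i : Fin n, Real.exp (p i.castSucc - p (Fin.last n))) := by
  have minimizer_iff {μ a b : ℝ} :=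
    effDual_unique_multiplier_minimizer_general (μ := μ) (a := a) (b := b)
      (sigmaP_pos (p := p) hA hA0) hα₁ hα₂
  exact ⟨minimizer_iff.mpr ⟨rfl, rfl, rfl⟩, fun _ _ _ => minimizer_iff.mp⟩
end

section
/- Let A be an n×n real matrix with all entries positive, and let L, U be n×n real matrices with 0 ≤ L_{ij} ≤ U_{ij} and U_{ij} > 0 for all i, j. For p ∈ ℝⁿ define the truncated scaling dual θ(p, η, ζ) = Σ_{i,j=1}^n A_{ij} e^{p_i − p_j + η_{ij} − ζ_{ij}} − Σ_{i,j=1}^n L_{ij} η_{ij} + Σ_{i,j=1}^n U_{ij} ζ_{ij}. Then for every fixed p ∈ ℝⁿ, the pair (η, ζ) defined by e^{η_{ij}} = max(L_{ij}/(A_{ij} e^{p_i − p_j}), 1) and e^{−ζ_{ij}} = min(U_{ij}/(A_{ij} e^{p_i − p_j}), 1) is a global minimizer of (η, ζ) ↦ θ(p, η, ζ) over the set { (η, ζ) : η_{ij} ≥ 0, ζ_{ij} ≥ 0 for all i, j }. -/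
open BigOperators

/-- The truncated scaling dual function
`θ(p, η, ζ) = Σ A_{ij} e^{p_i−p_j+η_{ij}−ζ_{ij}} − Σ L_{ij} η_{ij} + Σ U_{ij} ζ_{ij}`. -/
noncomputable def truncDual {n : ℕ} (A L U : Matrix (Fin n) (Fin n) ℝ)
    (p : Fin n → ℝ) (η ζ : Matrix (Fin n) (Fin n) ℝ) : ℝ :=
  (∑ i, ∑ j, A i j * Real.exp (p i - p j + η i j - ζ i j))
    - (∑ i, ∑ j, L i j * η i j) + ∑ i, ∑ j, U i j * ζ i j

/-! For fixed `p` the dual is a sum of functions `c e^{x−y} − l x + u y`, one for each entry, with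
`c = A_{ij} e^{p_i−p_j}`. Each of them is convex, so over `x, y ≥ 0` the KKT conditions are
sufficient for a minimum. At the stated multipliers `c e^{x−y}` is `c` truncated to `[l, u]`, and a
multiplier is nonzero only where its bound is attained. -/

/-- The contribution to `truncDual` of an entry with scaled value `c` and bounds `l`, `u`, as a
function of the multipliers `x` of the lower bound and `y` of the upper bound. -/
noncomputable def entryDual (c l u x y : ℝ) : ℝ :=
  c * Real.exp (x - y) - l * x + u * y

/-- The optimal multiplier of the lower bound `l` for an entry with scaled value `c`: the `x` with
`e^x = max (l / c) 1`. -/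
noncomputable def lowerMultiplier (c l : ℝ) : ℝ :=
  Real.log (max (l / c) 1)

/-- The optimal multiplier of the upper bound `u` for an entry with scaled value `c`: the `y` with
`e^{-y} = min (u / c) 1`. -/
noncomputable def upperMultiplier (c u : ℝ) : ℝ :=
  -Real.log (min (u / c) 1)

theorem truncDual_eq_sum_entryDual {n : ℕ} (A L U : Matrix (Fin n) (Fin n) ℝ)
    (p : Fin n → ℝ) (η ζ : Matrix (Fin n) (Fin n) ℝ) :
    truncDual A L U p η ζ =
      ∑ i, ∑ j, entryDual (A i j * Real.exp (p i - p j)) (L i j) (U i j) (η i j) (ζ i j) := by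
  simp only [truncDual, entryDual, Finset.sum_add_distrib, Finset.sum_sub_distrib, mul_assoc,
    ← Real.exp_add, add_sub_assoc]

theorem entryDual_le_of_kkt {c l u a b x y : ℝ} (hc : 0 ≤ c)
    (hl : l ≤ c * Real.exp (a - b)) (hu : c * Real.exp (a - b) ≤ u)
    (ha : (c * Real.exp (a - b) - l) * a = 0) (hb : (u - c * Real.exp (a - b)) * b = 0)
    (hx : 0 ≤ x) (hy : 0 ≤ y) :
    entryDual c l u a b ≤ entryDual c l u x y := by
  unfold entryDual
  set X := c * Real.exp (a - b) with hX
  have tangent : X * ((x - y) - (a - b) + 1) ≤ c * Real.exp (x - y) := calc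
    X * ((x - y) - (a - b) + 1) ≤ X * Real.exp ((x - y) - (a - b)) := by
      gcongr
      exact Real.add_one_le_exp _
    _ = c * Real.exp (x - y) := by
      rw [hX, mul_assoc, ← Real.exp_add, add_sub_cancel]
  have lower_slack : 0 ≤ (X - l) * x := mul_nonneg (sub_nonneg.2 hl) hx
  have upper_slack : 0 ≤ (u - X) * y := mul_nonneg (sub_nonneg.2 hu) hy
  linarith

theorem lowerMultiplier_nonneg (c l : ℝ) : 0 ≤ lowerMultiplier c l :=
  Real.log_nonneg (le_max_right _ _)

theorem lowerMultiplier_eq_zero {c l : ℝ} (hc : 0 < c) (h : l ≤ c) : lowerMultiplier c l = 0 := by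
  rw [lowerMultiplier, max_eq_right ((div_le_one hc).2 h), Real.log_one]

theorem mul_exp_lowerMultiplier {c : ℝ} (hc : 0 < c) (l : ℝ) :
    c * Real.exp (lowerMultiplier c l) = max l c := by
  rw [lowerMultiplier, Real.exp_log (lt_max_of_lt_right one_pos), mul_max_of_nonneg _ _ hc.le,
    mul_div_cancel₀ _ hc.ne', mul_one]

theorem upperMultiplier_nonneg {c u : ℝ} (hc : 0 ≤ c) (hu : 0 ≤ u) : 0 ≤ upperMultiplier c u :=
  neg_nonneg.2 <| Real.log_nonpos (le_min (div_nonneg hu hc) zero_le_one) (min_le_right _ _)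

theorem upperMultiplier_eq_zero {c u : ℝ} (hc : 0 < c) (h : c ≤ u) : upperMultiplier c u = 0 := by
  rw [upperMultiplier, min_eq_right ((one_le_div hc).2 h), Real.log_one, neg_zero]

theorem mul_exp_neg_upperMultiplier {c u : ℝ} (hc : 0 < c) (hu : 0 < u) :
    c * Real.exp (-upperMultiplier c u) = min u c := by
  rw [upperMultiplier, neg_neg, Real.exp_log (lt_min (div_pos hu hc) one_pos),
    mul_min_of_nonneg _ _ hc.le, mul_div_cancel₀ _ hc.ne', mul_one]

theorem mul_exp_lowerMultiplier_sub_upperMultiplier {c l u : ℝ} (hc : 0 < c) (hlu : l ≤ u)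
    (hu : 0 < u) :
    c * Real.exp (lowerMultiplier c l - upperMultiplier c u) = max l (min u c) := by
  rcases le_total l c with hlc | hcl
  · rw [lowerMultiplier_eq_zero hc hlc, zero_sub, mul_exp_neg_upperMultiplier hc hu,
      max_eq_right (le_min hlu hlc)]
  · have hcu : c ≤ u := hcl.trans hlu
    rw [upperMultiplier_eq_zero hc hcu, sub_zero, mul_exp_lowerMultiplier hc, min_eq_right hcu]

theorem max_min_sub_mul_lowerMultiplier {c l : ℝ} (hc : 0 < c) (u : ℝ) :
    (max l (min u c) - l) * lowerMultiplier c l = 0 := by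
  rcases le_total l c with hlc | hcl
  · rw [lowerMultiplier_eq_zero hc hlc, mul_zero]
  · rw [max_eq_left (min_le_of_right_le hcl), sub_self, zero_mul]

theorem sub_max_min_mul_upperMultiplier {c l u : ℝ} (hc : 0 < c) (hlu : l ≤ u) :
    (u - max l (min u c)) * upperMultiplier c u = 0 := by
  rcases le_total c u with hcu | huc
  · rw [upperMultiplier_eq_zero hc hcu, mul_zero]
  · rw [min_eq_left huc, max_eq_right hlu, sub_self, zero_mul]

theorem entryDual_multipliers_le {c l u x y : ℝ} (hc : 0 < c) (hlu : l ≤ u) (hu : 0 < u)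
    (hx : 0 ≤ x) (hy : 0 ≤ y) :
    entryDual c l u (lowerMultiplier c l) (upperMultiplier c u) ≤ entryDual c l u x y := by
  have truncated := mul_exp_lowerMultiplier_sub_upperMultiplier hc hlu hu
  refine entryDual_le_of_kkt hc.le ?_ ?_ ?_ ?_ hx hy <;> rw [truncated]
  · exact le_max_left _ _
  · exact max_le hlu (min_le_left _ _)
  · exact max_min_sub_mul_lowerMultiplier hc u
  · exact sub_max_min_mul_upperMultiplier hc hlu

theorem truncDual_multiplier_minimizer_general {n : ℕ} (A L U : Matrix (Fin n) (Fin n) ℝ)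
    (hA : ∀ i j, 0 < A i j) (hLU : ∀ i j, L i j ≤ U i j) (hU : ∀ i j, 0 < U i j)
    (p : Fin n → ℝ) :
    (∀ i j, 0 ≤ lowerMultiplier (A i j * Real.exp (p i - p j)) (L i j)) ∧
    (∀ i j, 0 ≤ upperMultiplier (A i j * Real.exp (p i - p j)) (U i j)) ∧
    ∀ η ζ : Matrix (Fin n) (Fin n) ℝ, (∀ i j, 0 ≤ η i j) → (∀ i j, 0 ≤ ζ i j) →
      truncDual A L U p
          (Matrix.of fun i j => lowerMultiplier (A i j * Real.exp (p i - p j)) (L i j))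
          (Matrix.of fun i j => upperMultiplier (A i j * Real.exp (p i - p j)) (U i j)) ≤
        truncDual A L U p η ζ := by
  have scaled_pos : ∀ i j, 0 < A i j * Real.exp (p i - p j) := fun i j =>
    mul_pos (hA i j) (Real.exp_pos _)
  refine ⟨fun i j => lowerMultiplier_nonneg _ _,
    fun i j => upperMultiplier_nonneg (scaled_pos i j).le (hU i j).le, fun η ζ hη hζ => ?_⟩
  simp only [truncDual_eq_sum_entryDual, Matrix.of_apply]
  exact Finset.sum_le_sum fun i _ => Finset.sum_le_sum fun j _ =>
    entryDual_multipliers_le (scaled_pos i j) (hLU i j) (hU i j) (hη i j) (hζ i j)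

/-- For fixed `p`, the multipliers given by `e^{η_{ij}} = max(L_{ij}/(A_{ij}e^{p_i−p_j}), 1)`
and `e^{−ζ_{ij}} = min(U_{ij}/(A_{ij}e^{p_i−p_j}), 1)` minimize `θ(p, ·, ·)` over the
nonnegative multipliers. -/
theorem truncDual_multiplier_minimizer {n : ℕ} (A L U : Matrix (Fin n) (Fin n) ℝ)
    (hA : ∀ i j, 0 < A i j) (hL : ∀ i j, 0 ≤ L i j) (hLU : ∀ i j, L i j ≤ U i j)
    (hU : ∀ i j, 0 < U i j) (p : Fin n → ℝ) :
    (∀ i j, 0 ≤ Real.log (max (L i j / (A i j * Real.exp (p i - p j))) 1)) ∧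
    (∀ i j, 0 ≤ -Real.log (min (U i j / (A i j * Real.exp (p i - p j))) 1)) ∧
    ∀ η ζ : Matrix (Fin n) (Fin n) ℝ, (∀ i j, 0 ≤ η i j) → (∀ i j, 0 ≤ ζ i j) →
      truncDual A L U p
          (fun i j => Real.log (max (L i j / (A i j * Real.exp (p i - p j))) 1))
          (fun i j => -Real.log (min (U i j / (A i j * Real.exp (p i - p j))) 1)) ≤
        truncDual A L U p η ζ :=
  truncDual_multiplier_minimizer_general A L U hA hLU hU p
end
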